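/- Let E be a type and Φ : E → ℝ → E a map with the semigroup (flow) properties Φ(x, 0) = x for all x, and Φ(Φ(x, s), t) = Φ(x, s + t) for all x and all s, t ≥ 0. Let h, h_B : E → ℝ, set S = { x | h(x) ≥ 0 } and S_B = { x | h_B(x) ≥ 0 }, and assume S_B ⊆ S and that S_B is forward invariant under Φ (for all x ∈ S_B and t ≥ 0, Φ(x, t) ∈ S_B). Fix T > 0 and define the implicit safe set S_I = { x ∈ E | (∀ t ∈ [0, T], Φ(x, t) ∈ S) ∧ Φ(x, T) ∈ S_B }. Then S_I is forward invariant under Φ: for all x ∈ S_I and all s ≥ 0, Φ(x, s) ∈ S_I. -/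

import Mathlib

/-- The implicit safe set `S_I` of a backup controller is forward invariant
under the closed-loop flow, provided the backup set is forward invariant and contained
in the nominal safe set. -/
theorem implicit_safe_set_forward_invariant
    {E : Type*} (Φ : E → ℝ → E)
    (hΦ0 : ∀ x : E, Φ x 0 = x)
    (hΦadd : ∀ (x : E) (s t : ℝ), 0 ≤ s → 0 ≤ t → Φ (Φ x s) t = Φ x (s + t))
    (h hB : E → ℝ)
    (hSB_sub : { x : E | 0 ≤ hB x } ⊆ { x : E | 0 ≤ h x })
    (hSB_inv : ∀ x ∈ { x : E | 0 ≤ hB x }, ∀ t : ℝ, 0 ≤ t → Φ x t ∈ { x : E | 0 ≤ hB x })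
    (T : ℝ) (hT : 0 < T) :
    ∀ x ∈ { x : E | (∀ t ∈ Set.Icc (0 : ℝ) T, Φ x t ∈ { y : E | 0 ≤ h y }) ∧
        Φ x T ∈ { y : E | 0 ≤ hB y } },
      ∀ s : ℝ, 0 ≤ s →
        Φ x s ∈ { x : E | (∀ t ∈ Set.Icc (0 : ℝ) T, Φ x t ∈ { y : E | 0 ≤ h y }) ∧
          Φ x T ∈ { y : E | 0 ≤ hB y } } := by
  rintro x ⟨hx, hxT⟩ s hs
  have key : ∀ u : ℝ, T ≤ u → Φ x u ∈ { y : E | 0 ≤ hB y } := by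
    intro u hu
    have h1 := hSB_inv _ hxT (u - T) (sub_nonneg.2 hu)
    rwa [hΦadd x T (u - T) hT.le (sub_nonneg.2 hu), add_sub_cancel] at h1
  refine ⟨fun t ht => ?_, ?_⟩
  · rw [hΦadd x s t hs ht.1]
    rcases le_total (s + t) T with hle | hle
    · exact hx _ ⟨add_nonneg hs ht.1, hle⟩
    · exact hSB_sub (key _ hle)
  · rw [hΦadd x s T hs hT.le]
    exact key _ (by linarith)
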